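/- Zariski's main theorem (weak version): let f: X → Y be a birational projective morphism of noetherian integral schemes with Y normal. Then f_*𝒪_X = 𝒪_Y. -/

import Mathlib

open CategoryTheory CategoryTheory.Limits AlgebraicGeometry

attribute [local instance] MvPolynomial.gradedAlgebra

/-- Projective `n`-space `ℙⁿ_ℤ` over `ℤ`, as `Proj` of the standard graded polynomial
ring `ℤ[x₀, …, xₙ]`. -/
noncomputable def ProjectiveSpaceZ (n : ℕ) : Scheme :=
  AlgebraicGeometry.Proj (MvPolynomial.homogeneousSubmodule (Fin (n + 1)) ℤ)

/-- Relative projective `n`-space `ℙⁿ_Y` over a scheme `Y`, i.e. the fiber product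
`ℙⁿ_ℤ ×_{Spec ℤ} Y` (recall `Spec ℤ` is the terminal scheme). -/
noncomputable def ProjectiveSpaceOver (n : ℕ) (Y : Scheme) : Scheme :=
  pullback (terminal.from (ProjectiveSpaceZ n)) (terminal.from Y)

/-- A morphism of schemes `f : X ⟶ Y` is projective if it factors as a closed
immersion into some relative projective space `ℙⁿ_Y` followed by the projection
to `Y`. -/
def IsProjectiveMorphism {X Y : Scheme} (f : X ⟶ Y) : Prop :=
  ∃ (n : ℕ) (ι : X ⟶ ProjectiveSpaceOver n Y),
    IsClosedImmersion ι ∧ ι ≫ pullback.snd _ _ = f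

/-- A morphism of irreducible schemes is birational if it sends the generic point to
the generic point and induces an isomorphism of the stalks there; for integral
schemes the stalk at the generic point is the function field, so this says that `f`
induces an isomorphism of function fields. -/
def IsBirationalMorphism {X Y : Scheme} [IrreducibleSpace X] [IrreducibleSpace Y]
    (f : X ⟶ Y) : Prop :=
  f.base (genericPoint X) = genericPoint Y ∧ IsIso (f.stalkMap (genericPoint X))

/-- A scheme is normal if all of its local rings are integrally closed domains. -/
def IsNormalScheme (Y : Scheme) : Prop :=
  ∀ y : Y, IsDomain (Y.presheaf.stalk y) ∧ IsIntegrallyClosed (Y.presheaf.stalk y)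

lemma zmtw_projZ (n : ℕ) : UniversallyClosed (terminal.from (ProjectiveSpaceZ n)) := by
  let 𝒜 := MvPolynomial.homogeneousSubmodule (Fin (n + 1)) ℤ
  have htow : IsScalarTower ℤ (𝒜 0) (MvPolynomial (Fin (n + 1)) ℤ) :=
    ⟨fun a b c => smul_mul_assoc a (b : MvPolynomial (Fin (n + 1)) ℤ) c⟩
  have hfin : Algebra.FiniteType (𝒜 0) (MvPolynomial (Fin (n + 1)) ℤ) :=
    Algebra.FiniteType.of_restrictScalars_finiteType ℤ _ _
  have h1 : UniversallyClosed (Proj.toSpecZero 𝒜) := inferInstance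
  let φ : CommRingCat.of ℤ ⟶ CommRingCat.of (𝒜 0) := CommRingCat.ofHom (Int.castRingHom (𝒜 0))
  have hφ : Function.Surjective φ := by
    rintro ⟨p, hp⟩
    have hp' : p.totalDegree = 0 := by
      rw [MvPolynomial.totalDegree_zero_iff_isHomogeneous]
      exact hp
    rw [MvPolynomial.totalDegree_eq_zero_iff_eq_C] at hp'
    refine ⟨MvPolynomial.coeff 0 p, Subtype.ext ?_⟩
    change (((MvPolynomial.coeff 0 p : ℤ) : 𝒜 0) : MvPolynomial (Fin (n + 1)) ℤ) = p
    conv_rhs => rw [hp']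
    exact (map_intCast (SetLike.GradeZero.subring 𝒜).subtype _).trans (eq_intCast MvPolynomial.C _).symm
  have h2 : IsClosedImmersion (Spec.map φ) := IsClosedImmersion.spec_of_surjective φ hφ
  have h3 : IsIso (terminal.from (Spec (CommRingCat.of ℤ))) :=
    isIso_of_isTerminal specZIsTerminal terminalIsTerminal _
  have h4 : terminal.from (ProjectiveSpaceZ n) =
      Proj.toSpecZero 𝒜 ≫ Spec.map φ ≫ terminal.from (Spec (CommRingCat.of ℤ)) :=
    Subsingleton.elim _ _
  have h5 : UniversallyClosed (Spec.map φ ≫ terminal.from (Spec (CommRingCat.of ℤ))) :=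
    inferInstance
  rw [h4]
  exact @universallyClosedTypeComp _ _ _ _ _ h1 h5

lemma zmtw_universallyClosed {X Y : Scheme} (f : X ⟶ Y) (hproj : IsProjectiveMorphism f) :
    UniversallyClosed f := by
  obtain ⟨n, ι, hι, rfl⟩ := hproj
  have := zmtw_projZ n
  have h1 : UniversallyClosed ι := inferInstance
  have h2 : UniversallyClosed (pullback.snd (terminal.from (ProjectiveSpaceZ n))
    (terminal.from Y)) := inferInstance
  exact @universallyClosedTypeComp _ _ _ ι (pullback.snd (terminal.from (ProjectiveSpaceZ n))
    (terminal.from Y)) h1 h2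

lemma zmtw_integral {X Y : Scheme} (f : X ⟶ Y) [UniversallyClosed f] (U : Y.Opens)
    (hU : IsAffineOpen U) (s : Γ(X, f ⁻¹ᵁ U)) : (f.app U).hom.IsIntegralElem s := by
  have : IsAffine U := hU
  have h := isIntegral_appTop_of_universallyClosed (f ∣_ U)
  have key : ∀ (W : Y.Opens) (h1 : W = U) (V : X.Opens) (h2 : V = f ⁻¹ᵁ W),
      (f.app W ≫ X.presheaf.map (eqToHom h2).op).hom.IsIntegral →
        (f.app U).hom.IsIntegralElem s := by
    rintro _ rfl _ rfl h
    have := h s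
    simpa using this
  refine key _ (by simp) _ (image_morphismRestrict_preimage f U ⊤) ?_
  rw [← morphismRestrict_appTop]
  exact h

/-- the generic stalk map as a ring equivalence -/
lemma zmtw_equiv {X Y : Scheme} [IsIntegral X] [IsIntegral Y] (f : X ⟶ Y)
    (hbir : IsBirationalMorphism f) :
    ∃ e : Y.functionField ≃+* X.functionField, ∀ (U : Y.Opens) (hY : genericPoint Y ∈ U)
      (hX : genericPoint X ∈ f ⁻¹ᵁ U) (t : Γ(Y, U)),
      e (Y.presheaf.germ U _ hY t) = X.presheaf.germ (f ⁻¹ᵁ U) _ hX (f.app U t) := by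
  obtain ⟨h1, h2⟩ := hbir
  let i : Y.functionField ≅ X.functionField :=
    Y.presheaf.stalkCongr (.of_eq h1.symm) ≪≫ @asIso _ _ _ _ (f.stalkMap (genericPoint X)) h2
  refine ⟨i.commRingCatIsoToRingEquiv, fun U hY hX t => ?_⟩
  have : Y.presheaf.germ U _ hY ≫ i.hom = f.app U ≫ X.presheaf.germ (f ⁻¹ᵁ U) _ hX := by
    simp only [i, Iso.trans_hom, TopCat.Presheaf.stalkCongr_hom, asIso_hom]
    erw [TopCat.Presheaf.germ_stalkSpecializes_assoc]
    exact Scheme.Hom.germ_stalkMap f U _ hX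
  exact congr($this t)

lemma zmtw_inj {X Y : Scheme} [IsIntegral X] [IsIntegral Y] (f : X ⟶ Y)
    (hbir : IsBirationalMorphism f) (U : Y.Opens) : Function.Injective (f.app U) := by
  obtain ⟨e, he⟩ := zmtw_equiv f hbir
  by_cases hU : genericPoint Y ∈ U
  · have hX : genericPoint X ∈ f ⁻¹ᵁ U := by
      change f.base (genericPoint X) ∈ U
      rw [hbir.1]; exact hU
    intro a b hab
    apply germ_injective_of_isIntegral _ _ hU
    apply e.injective
    rw [he U hU hX, he U hU hX, hab]
  · have : U = ⊥ := by
      ext x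
      simp only [TopologicalSpace.Opens.coe_bot, Set.mem_empty_iff_false, iff_false]
      intro hx
      exact hU (((genericPoint_spec Y).mem_open_set_iff U.isOpen).mpr ⟨x, trivial, hx⟩)
    subst this
    have : Subsingleton Γ(Y, ⊥) := inferInstance
    exact Function.injective_of_subsingleton _

lemma zmtw_local {X Y : Scheme} [IsIntegral X] [IsIntegral Y] (f : X ⟶ Y) [UniversallyClosed f]
    (hbir : IsBirationalMorphism f) (hnormal : IsNormalScheme Y) (U : Y.Opens)
    (s : Γ(X, f ⁻¹ᵁ U)) (y : Y) (hy : y ∈ U) :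
    ∃ (V : Y.Opens) (_ : y ∈ V) (i : V ≤ U) (t : Γ(Y, V)),
      f.app V t = X.presheaf.map (homOfLE (f.preimage_mono i)).op s := by
  obtain ⟨e, he⟩ := zmtw_equiv f hbir
  have hgY : ∀ V : Y.Opens, y ∈ V → genericPoint Y ∈ V := fun V hV =>
    ((genericPoint_spec Y).mem_open_set_iff V.isOpen).mpr ⟨y, trivial, hV⟩
  have hgX : ∀ V : Y.Opens, y ∈ V → genericPoint X ∈ f ⁻¹ᵁ V := fun V hV => by
    change f.base (genericPoint X) ∈ V
    rw [hbir.1]; exact hgY V hV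
  obtain ⟨W, hW, hyW, hWU⟩ := exists_isAffineOpen_mem_and_subset (x := y) (U := U) hy
  have hWU' : W ≤ U := hWU
  let sW : Γ(X, f ⁻¹ᵁ W) := X.presheaf.map (homOfLE (f.preimage_mono hWU')).op s
  obtain ⟨p, hp, hps⟩ := zmtw_integral f W hW sW
  let σ : Y.functionField := e.symm (X.presheaf.germ _ _ (hgX W hyW) sW)
  have hσ : IsIntegral (Y.presheaf.stalk y) σ := by
    refine ⟨p.map (Y.presheaf.germ W y hyW).hom, hp.map _, ?_⟩
    rw [Polynomial.eval₂_map]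
    apply e.injective
    rw [map_zero, ← RingEquiv.coe_toRingHom, Polynomial.hom_eval₂]
    have h0 := congr(X.presheaf.germ _ _ (hgX W hyW) $hps)
    rw [map_zero] at h0
    rw [← h0]
    erw [Polynomial.hom_eval₂ p (f.app W).hom (X.presheaf.germ _ _ (hgX W hyW)).hom sW]
    congr 1
    · ext a
      have : Nonempty W := ⟨⟨y, hyW⟩⟩
      have h5 := Y.algebraMap_germ_eq_germToFunctionField hyW a
      have h6 := he W (hgY W hyW) (hgX W hyW) a
      simp only [RingHom.comp_apply]
      erw [h5]
      exact h6
    · exact e.apply_symm_apply _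
  have := (hnormal y).2
  obtain ⟨τ, hτ⟩ := IsIntegrallyClosed.isIntegral_iff.mp hσ
  obtain ⟨V, hyV, t, rfl⟩ := Y.presheaf.exists_germ_eq τ
  let V' := V ⊓ W
  have hyV' : y ∈ V' := ⟨hyV, hyW⟩
  refine ⟨V', hyV', inf_le_right.trans hWU', Y.presheaf.map (homOfLE inf_le_left).op t, ?_⟩
  apply germ_injective_of_isIntegral _ _ (hgX V' hyV')
  rw [← he V' (hgY V' hyV') (hgX V' hyV')]
  rw [TopCat.Presheaf.germ_res_apply, TopCat.Presheaf.germ_res_apply]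
  have : Nonempty V := ⟨⟨y, hyV⟩⟩
  have h5 := Y.algebraMap_germ_eq_germToFunctionField hyV t
  have h6 := (h5.symm.trans hτ)
  refine (congrArg e h6).trans ((e.apply_symm_apply _).trans ?_)
  exact TopCat.Presheaf.germ_res_apply _ _ _ _ _

theorem zariski_main_theorem_weak
    {X Y : Scheme} [IsIntegral X] [IsIntegral Y]
    [AlgebraicGeometry.IsNoetherian X] [AlgebraicGeometry.IsNoetherian Y]
    (f : X ⟶ Y)
    (hproj : IsProjectiveMorphism f)
    (hbir : IsBirationalMorphism f)
    (hnormal : IsNormalScheme Y) :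
    IsIso f.c := by
  have := zmtw_universallyClosed f hproj
  let F : TopCat.Sheaf CommRingCat Y := Y.sheaf
  let G : TopCat.Sheaf CommRingCat Y := (TopCat.Sheaf.pushforward _ f.base).obj X.sheaf
  let g : F ⟶ G := ⟨f.c⟩
  have hinj : ∀ U : TopologicalSpace.Opens Y, Function.Injective (f.c.app (.op U)) :=
    fun U => zmtw_inj f hbir U
  have : ∀ U, IsIso (f.c.app U) := by
    intro U
    refine (ConcreteCategory.isIso_iff_bijective _).mpr ⟨hinj U.unop, ?_⟩
    refine TopCat.Presheaf.app_surjective_of_injective_of_locally_surjective g U.unop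
      (fun x _ => TopCat.Presheaf.stalkFunctor_map_injective_of_app_injective hinj x) ?_
    intro s y hy
    obtain ⟨V, hyV, i, t, h⟩ := zmtw_local f hbir hnormal U.unop s y hy
    exact ⟨V, hyV, homOfLE i, t, h⟩
  exact NatIso.isIso_of_isIso_app _
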